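/- The restriction of 𝒲([3]) to symmetric functions is given in power-sum coordinates by: for every polynomial F in p₁, p₂, … and every N ≥ 1, (1/3)·Σ_{a,b,c=1}^N :D_{ab}D_{bc}D_{ca}:(F(p(X))) equals the value at p = p(X) of [(1/3)Σ_{a,b,c≥1} a·b·c·p_{a+b+c}·∂³/(∂p_a∂p_b∂p_c) + (1/2)Σ_{a+b=c+d} c·d·(1−δ_{ac}δ_{bd})·p_a p_b·∂²/(∂p_c∂p_d) + (1/3)Σ_{a,b,c≥1} (a+b+c)·(p_a p_b p_c + p_{a+b+c})·∂/∂p_{a+b+c}] F. -/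

import Mathlib

open scoped Classical
open MvPolynomial

/-- The polynomial ring `ℚ[X_{ij} : 1 ≤ i,j ≤ N]` in the entries of an `N×N` matrix of
independent variables. -/
abbrev RN (N : ℕ) : Type := MvPolynomial (Fin N × Fin N) ℚ

/-- The `N×N` matrix `X` of independent variables. -/
noncomputable def XM (N : ℕ) : Matrix (Fin N) (Fin N) (RN N) :=
  Matrix.of fun i j => MvPolynomial.X (i, j)

/-- The power sums `p_k = tr X^k`. -/
noncomputable def pSub (N : ℕ) (k : ℕ+) : RN N := Matrix.trace ((XM N) ^ (k : ℕ))

/-- Substitution `F ↦ F(p(X))` of `p_k = tr X^k` into a polynomial in `p₁, p₂, …`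
(the variable of index `k : ℕ+` is `p_k`). -/
noncomputable def psubst (N : ℕ) : MvPolynomial ℕ+ ℚ →ₐ[ℚ] RN N :=
  MvPolynomial.aeval (pSub N)

/-- The operator `D_{ab} = Σ_{e=1}^N X_{ae} ∂/∂X_{be}`. -/
noncomputable def DN (N : ℕ) (a b : Fin N) (P : RN N) : RN N :=
  ∑ e : Fin N, MvPolynomial.X (a, e) * MvPolynomial.pderiv (b, e) P

/-- The normally ordered operator
`:D_{a₁b₁}⋯D_{a_nb_n}: = Σ_{e₁,…,e_n=1}^N X_{a₁e₁}⋯X_{a_ne_n} ∂ⁿ/(∂X_{b₁e₁}⋯∂X_{b_ne_n})`. -/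
noncomputable def NOpN (N : ℕ) {n : ℕ} (a b : Fin n → Fin N) (P : RN N) : RN N :=
  ∑ e : Fin n → Fin N,
    (∏ i, MvPolynomial.X (a i, e i)) *
      (List.ofFn (fun i => ((b i, e i) : Fin N × Fin N))).foldr
        (fun v G => MvPolynomial.pderiv v G) P

/-- The full cycle type of a permutation of `Fin n`, including fixed points
(i.e. rows of length 1). -/
noncomputable def fullCycleType {n : ℕ} (g : Equiv.Perm (Fin n)) : Multiset ℕ :=
  g.cycleType + Multiset.replicate (n - g.cycleType.sum) 1

/-- `κ(Δ) = (∏_k m_k! k^{m_k})⁻¹` where `m_k` is the number of rows of length `k`. -/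
noncomputable def kappa (parts : Multiset ℕ) : ℚ :=
  (∏ k ∈ parts.toFinset, (((parts.count k).factorial : ℚ) * (k : ℚ) ^ (parts.count k)))⁻¹

/-- The operator `𝒲_N(Δ) = κ(Δ) Σ_{a₁,…,a_n=1}^N :D_{a₁a_{g(1)}}⋯D_{a_na_{g(n)}}:`
computed from a permutation `g` of cycle type `Δ`. -/
noncomputable def WN (N : ℕ) {n : ℕ} (Δ : Nat.Partition n) (g : Equiv.Perm (Fin n))
    (P : RN N) : RN N :=
  kappa Δ.parts • ∑ a : Fin n → Fin N, NOpN N a (fun i => a (g i)) P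

/-!
By the third-order chain rule, a third derivative of `F(p)` is a combination of products of
derivatives of the power sums `p_k = tr Xᵏ`, and differentiating `tr Xᵏ` cuts the cyclic word `Xᵏ`
into open strings. The contraction `:tr D³:` glues the strings back together cyclically:

* three first derivatives of `p_i, p_j, p_k` merge into `p_{i+j+k}`;
* a first derivative of `p_i` against a second derivative of `p_j` gives `p_a p_{b+i}` for every
  splitting `a + b = j`. The three placements of the derivatives agree because the contraction is
  invariant under cyclic rotation. Symmetrised in `i` and `j`, these terms run over all splittings
  of `i + j` except `(i, j)` itself, which is the factor `1 - δδ`;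
* a third derivative of `p_k` cuts the word into three strings of lengths `a + b + c = k` in one of
  two cyclic orders: one closes each string separately, giving `p_a p_b p_c`, the other rejoins
  them into `p_k`.
-/

lemma sum_rotate {α β γ M : Type*} [AddCommMonoid M] (s : Finset α) (t : Finset β)
    (u : Finset γ) (f : α → β → γ → M) :
    ∑ a ∈ s, ∑ b ∈ t, ∑ c ∈ u, f a b c = ∑ b ∈ t, ∑ c ∈ u, ∑ a ∈ s, f a b c := by
  rw [Finset.sum_comm]
  exact Finset.sum_congr rfl fun b _ ↦ Finset.sum_comm

section Derivation

variable {R A σ : Type*} [CommSemiring R] [CommSemiring A] [Algebra R A]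

lemma pderiv_comm (i j : σ) (F : MvPolynomial σ R) :
    pderiv i (pderiv j F) = pderiv j (pderiv i F) := by
  obtain rfl | hij := eq_or_ne i j
  · rfl
  induction F using MvPolynomial.monomial_add_induction_on with
  | C r => simp
  | monomial_add m r G _ _ hG =>
    simp [hG, pderiv_monomial, tsub_right_comm, hij, hij.symm, mul_right_comm]

lemma vars_pderiv_subset (i : σ) (F : MvPolynomial σ R) : (pderiv i F).vars ⊆ F.vars := by
  intro j hj
  obtain ⟨m, hm, hjm⟩ := (mem_vars_iff_mem_support j).mp hj
  refine (mem_vars_iff_mem_support j).mpr ⟨m + Finsupp.single i 1, ?_, ?_⟩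
  · rw [mem_support_iff, coeff_pderiv] at hm
    exact mem_support_iff.mpr (left_ne_zero_of_mul hm)
  · simp only [Finsupp.mem_support_iff, Finsupp.add_apply] at hjm ⊢
    lia

lemma mem_vars_of_pderiv_ne_zero {i : σ} {F : MvPolynomial σ R} (h : pderiv i F ≠ 0) :
    i ∈ F.vars :=
  not_imp_comm.mp pderiv_eq_zero_of_notMem_vars h

lemma mem_vars_of_pderiv_pderiv_ne_zero {i j : σ} {F : MvPolynomial σ R}
    (h : pderiv i (pderiv j F) ≠ 0) : i ∈ F.vars ∧ j ∈ F.vars :=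
  ⟨vars_pderiv_subset j F (mem_vars_of_pderiv_ne_zero h),
    mem_vars_of_pderiv_ne_zero fun hj ↦ h (by rw [hj, map_zero])⟩

lemma mem_vars_of_pderiv_pderiv_pderiv_ne_zero {i j k : σ} {F : MvPolynomial σ R}
    (h : pderiv i (pderiv j (pderiv k F)) ≠ 0) : i ∈ F.vars ∧ j ∈ F.vars ∧ k ∈ F.vars :=
  ⟨vars_pderiv_subset k F (mem_vars_of_pderiv_pderiv_ne_zero h).1,
    mem_vars_of_pderiv_pderiv_ne_zero fun hjk ↦ h (by rw [hjk, map_zero])⟩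

lemma derivation_aeval (D : Derivation R A A) (f : σ → A) {F : MvPolynomial σ R}
    {s : Finset σ} (hF : F.vars ⊆ s) :
    D (aeval f F) = ∑ i ∈ s, aeval f (pderiv i F) * D (f i) := by
  have hF' : F ∈ Algebra.adjoin R (X '' (s : Set σ)) :=
    mem_supported.mpr (Finset.coe_subset.mpr hF)
  clear hF
  induction hF' using Algebra.adjoin_induction with
  | mem G hG =>
    obtain ⟨j, hj, rfl⟩ := hG
    rw [Finset.sum_eq_single_of_mem j hj fun i _ hij ↦ by simp [pderiv_X_of_ne hij.symm]]
    simp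
  | algebraMap r => simp
  | add G H _ _ hG hH => simp only [map_add, hG, hH, add_mul, Finset.sum_add_distrib]
  | mul G H _ _ hG hH =>
    simp only [map_mul, Derivation.leibniz, hG, hH, map_add, smul_eq_mul, add_mul,
      Finset.sum_add_distrib, Finset.mul_sum, mul_assoc]

lemma derivation_aeval_mul (D : Derivation R A A) (f : σ → A) {F : MvPolynomial σ R}
    {s : Finset σ} (hF : F.vars ⊆ s) (y : A) :
    D (aeval f F * y) = aeval f F * D y + ∑ i ∈ s, aeval f (pderiv i F) * (D (f i) * y) := by
  rw [Derivation.leibniz, derivation_aeval D f hF, smul_eq_mul, smul_eq_mul, Finset.mul_sum]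
  exact congrArg _ (Finset.sum_congr rfl fun _ _ ↦ by ring)

lemma derivation_derivation_aeval (D₁ D₂ : Derivation R A A) (f : σ → A)
    (F : MvPolynomial σ R) :
    D₁ (D₂ (aeval f F)) =
      (∑ i ∈ F.vars, ∑ j ∈ F.vars, aeval f (pderiv i (pderiv j F)) * (D₁ (f i) * D₂ (f j))) +
      ∑ i ∈ F.vars, aeval f (pderiv i F) * D₁ (D₂ (f i)) := by
  rw [derivation_aeval D₂ f subset_rfl, map_sum]
  simp only [derivation_aeval_mul D₁ f (vars_pderiv_subset _ F), Finset.sum_add_distrib]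
  rw [add_comm, Finset.sum_comm]

lemma derivation_derivation_derivation_aeval (D₁ D₂ D₃ : Derivation R A A) (f : σ → A)
    (F : MvPolynomial σ R) :
    D₁ (D₂ (D₃ (aeval f F))) =
      (∑ i ∈ F.vars, ∑ j ∈ F.vars, ∑ k ∈ F.vars,
        aeval f (pderiv i (pderiv j (pderiv k F))) * (D₁ (f i) * D₂ (f j) * D₃ (f k))) +
      (∑ i ∈ F.vars, ∑ j ∈ F.vars, aeval f (pderiv i (pderiv j F)) *
        (D₁ (f i) * D₂ (D₃ (f j)) + D₂ (f i) * D₁ (D₃ (f j)) + D₃ (f i) * D₁ (D₂ (f j)))) +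
      ∑ i ∈ F.vars, aeval f (pderiv i F) * D₁ (D₂ (D₃ (f i))) := by
  have hF₂ (i j : σ) : (pderiv i (pderiv j F)).vars ⊆ F.vars :=
    (vars_pderiv_subset i _).trans (vars_pderiv_subset j F)
  have h_first : D₁ (∑ i ∈ F.vars, aeval f (pderiv i F) * D₂ (D₃ (f i))) =
      (∑ i ∈ F.vars, ∑ j ∈ F.vars,
        aeval f (pderiv i (pderiv j F)) * (D₁ (f i) * D₂ (D₃ (f j)))) +
      ∑ i ∈ F.vars, aeval f (pderiv i F) * D₁ (D₂ (D₃ (f i))) := by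
    simp only [map_sum, derivation_aeval_mul D₁ f (vars_pderiv_subset _ F),
      Finset.sum_add_distrib]
    rw [add_comm, Finset.sum_comm]
  have h_second : D₁ (∑ i ∈ F.vars, ∑ j ∈ F.vars,
        aeval f (pderiv i (pderiv j F)) * (D₂ (f i) * D₃ (f j))) =
      (∑ i ∈ F.vars, ∑ j ∈ F.vars, ∑ k ∈ F.vars,
        aeval f (pderiv i (pderiv j (pderiv k F))) * (D₁ (f i) * D₂ (f j) * D₃ (f k))) +
      ((∑ i ∈ F.vars, ∑ j ∈ F.vars,
        aeval f (pderiv i (pderiv j F)) * (D₂ (f i) * D₁ (D₃ (f j)))) +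
      ∑ i ∈ F.vars, ∑ j ∈ F.vars,
        aeval f (pderiv i (pderiv j F)) * (D₃ (f j) * D₁ (D₂ (f i)))) := by
    simp only [map_sum, derivation_aeval_mul D₁ f (hF₂ _ _), Derivation.leibniz, smul_eq_mul,
      mul_add, Finset.sum_add_distrib]
    rw [add_comm, ← sum_rotate]
    simp only [mul_assoc]
  have h_swap : ∑ i ∈ F.vars, ∑ j ∈ F.vars,
        aeval f (pderiv i (pderiv j F)) * (D₃ (f j) * D₁ (D₂ (f i))) =
      ∑ i ∈ F.vars, ∑ j ∈ F.vars,
        aeval f (pderiv i (pderiv j F)) * (D₃ (f i) * D₁ (D₂ (f j))) := by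
    rw [Finset.sum_comm]
    exact Finset.sum_congr rfl fun i _ ↦ Finset.sum_congr rfl fun j _ ↦ by rw [pderiv_comm]
  rw [derivation_derivation_aeval, map_add, h_first, h_second, h_swap]
  simp only [mul_add, Finset.sum_add_distrib]
  abel

end Derivation

section PNatAntidiagonal

/-- The pairs `(i, j)` of positive integers with `i + j = n`. Since `ℕ+` has no zero, this is not
an instance of `Finset.HasAntidiagonal`. -/
def pnatAntidiagonal (n : ℕ+) : Finset (ℕ+ × ℕ+) :=
  {x ∈ Finset.Icc 1 n ×ˢ Finset.Icc 1 n | x.1 + x.2 = n}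

lemma mem_pnatAntidiagonal {n : ℕ+} {x : ℕ+ × ℕ+} :
    x ∈ pnatAntidiagonal n ↔ x.1 + x.2 = n := by
  refine ⟨fun hx ↦ (Finset.mem_filter.mp hx).2, ?_⟩
  rintro rfl
  simp [pnatAntidiagonal, (PNat.lt_add_right _ _).le, (PNat.lt_add_left _ _).le]

variable {M : Type*} [AddCommMonoid M]

lemma sum_pnatAntidiagonal_swap (n : ℕ+) (f : ℕ+ × ℕ+ → M) :
    ∑ x ∈ pnatAntidiagonal n, f x.swap = ∑ x ∈ pnatAntidiagonal n, f x :=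
  Finset.sum_equiv (Equiv.prodComm ℕ+ ℕ+) (by simp [mem_pnatAntidiagonal, add_comm])
    fun _ _ ↦ rfl

lemma sum_pnatAntidiagonal_one (f : ℕ+ × ℕ+ → M) : ∑ x ∈ pnatAntidiagonal 1, f x = 0 := by
  refine Finset.sum_eq_zero fun x hx ↦ absurd (mem_pnatAntidiagonal.mp hx) ?_
  exact ((one_le (a := x.1)).trans_lt (PNat.lt_add_right _ _)).ne'

lemma pnatAntidiagonal_add (c d : ℕ+) :
    pnatAntidiagonal (c + d) =
      insert (c, d) ((pnatAntidiagonal c).image (fun y ↦ (y.1, y.2 + d)) ∪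
        (pnatAntidiagonal d).image (fun y ↦ (c + y.1, y.2))) := by
  ext ⟨a, b⟩
  simp only [mem_pnatAntidiagonal, Finset.mem_insert, Finset.mem_union, Finset.mem_image,
    Prod.mk.injEq, Prod.exists]
  constructor
  · intro hab
    obtain hac | rfl | hca := lt_trichotomy a c
    · have hc := PNat.add_sub_of_lt hac
      refine .inr (.inl ⟨a, c - a, hc, rfl, ?_⟩)
      rw [← hc, add_assoc] at hab
      exact (add_left_cancel hab).symm
    · exact .inl ⟨rfl, add_left_cancel hab⟩
    · have ha := PNat.add_sub_of_lt hca
      refine .inr (.inr ⟨a - c, b, ?_, ha, rfl⟩)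
      rw [← ha, add_assoc] at hab
      exact add_left_cancel hab
  · rintro (⟨rfl, rfl⟩ | ⟨p, q, rfl, rfl, rfl⟩ | ⟨p, q, rfl, rfl, rfl⟩)
    exacts [rfl, (add_assoc _ _ _).symm, add_assoc _ _ _]

lemma sum_pnatAntidiagonal_add (c d : ℕ+) (f : ℕ+ × ℕ+ → M) :
    ∑ x ∈ pnatAntidiagonal (c + d), f x = f (c, d) +
      (∑ y ∈ pnatAntidiagonal c, f (y.1, y.2 + d) +
        ∑ y ∈ pnatAntidiagonal d, f (c + y.1, y.2)) := by
  have h_fst_lt (x) (hx : x ∈ (pnatAntidiagonal c).image fun y ↦ (y.1, y.2 + d)) : x.1 < c := by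
    obtain ⟨y, hy, rfl⟩ := Finset.mem_image.mp hx
    exact mem_pnatAntidiagonal.mp hy ▸ PNat.lt_add_right _ _
  have h_lt_fst (x) (hx : x ∈ (pnatAntidiagonal d).image fun y ↦ (c + y.1, y.2)) : c < x.1 := by
    obtain ⟨y, -, rfl⟩ := Finset.mem_image.mp hx
    exact PNat.lt_add_right _ _
  rw [pnatAntidiagonal_add, Finset.sum_insert, Finset.sum_union, Finset.sum_image,
    Finset.sum_image]
  · rintro ⟨p, q⟩ - ⟨p', q'⟩ - h
    simpa using h
  · rintro ⟨p, q⟩ - ⟨p', q'⟩ - h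
    simpa using h
  · exact Finset.disjoint_left.mpr fun x hx hx' ↦ (h_fst_lt x hx).asymm (h_lt_fst x hx')
  · rw [Finset.mem_union]
    rintro (h | h)
    exacts [(h_fst_lt _ h).false, (h_lt_fst _ h).false]

lemma sum_pnatAntidiagonal_add_one (n : ℕ+) (f : ℕ+ × ℕ+ → M) :
    ∑ x ∈ pnatAntidiagonal (n + 1), f x =
      f (n, 1) + ∑ x ∈ pnatAntidiagonal n, f (x.1, x.2 + 1) := by
  rw [sum_pnatAntidiagonal_add, sum_pnatAntidiagonal_one, add_zero]

lemma card_pnatAntidiagonal_add_one (n : ℕ+) : (pnatAntidiagonal (n + 1)).card = n := by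
  induction n using PNat.recOn with
  | one => rfl
  | succ n ih =>
    rw [Finset.card_eq_sum_ones] at ih ⊢
    rw [sum_pnatAntidiagonal_add_one, ih, PNat.add_coe, PNat.one_coe, add_comm]

end PNatAntidiagonal

section MatrixDerivation

variable {R A l m n : Type*} [CommSemiring R] [CommSemiring A] [Algebra R A]
  (D : Derivation R A A)

lemma map_derivation_mul [Fintype m] (P : Matrix l m A) (Q : Matrix m n A) :
    (P * Q).map D = P.map D * Q + P * Q.map D := by
  ext i j
  simp only [Matrix.map_apply, Matrix.mul_apply, Matrix.add_apply, map_sum, Derivation.leibniz,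
    smul_eq_mul, Finset.sum_add_distrib]
  rw [add_comm]
  simp only [mul_comm]

variable [Fintype n] [DecidableEq n]

lemma map_derivation_pow_natPred (P : Matrix n n A) (k : ℕ+) :
    (P ^ k.natPred).map D =
      ∑ x ∈ pnatAntidiagonal k, P ^ x.1.natPred * P.map D * P ^ x.2.natPred := by
  have h_one : PNat.natPred 1 = 0 := rfl
  induction k using PNat.recOn with
  | one =>
    ext i j
    simp [h_one, sum_pnatAntidiagonal_one, Matrix.one_apply, apply_ite D]
  | succ k ih =>
    have h_pow (k : ℕ+) : P ^ (k + 1).natPred = P ^ k.natPred * P := by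
      rw [← pow_succ, PNat.natPred_add_one]; rfl
    simp only [h_pow, map_derivation_mul, ih, sum_pnatAntidiagonal_add_one, Finset.sum_mul,
      mul_assoc]
    rw [h_one, pow_zero, mul_one, add_comm]

lemma derivation_trace_pow (P : Matrix n n A) (k : ℕ+) :
    D (P ^ (k : ℕ)).trace = k * (P ^ k.natPred * P.map D).trace := by
  have h_cycle (x) (hx : x ∈ pnatAntidiagonal (k + 1)) :
      (P ^ x.1.natPred * P.map D * P ^ x.2.natPred).trace =
        (P ^ k.natPred * P.map D).trace := by
    rw [Matrix.trace_mul_cycle, ← pow_add]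
    have h_exp : x.2.natPred + x.1.natPred = k.natPred := by
      have h_sum : (x.1 + x.2 : ℕ) = k + 1 := congrArg PNat.val (mem_pnatAntidiagonal.mp hx)
      simp only [← PNat.natPred_add_one] at h_sum
      lia
    rw [h_exp]
  calc D (P ^ (k : ℕ)).trace = ((P ^ (k + 1).natPred).map D).trace := by
        simp [Matrix.trace, PNat.natPred]
    _ = ∑ _x ∈ pnatAntidiagonal (k + 1), (P ^ k.natPred * P.map D).trace := by
        rw [map_derivation_pow_natPred, Matrix.trace_sum, Finset.sum_congr rfl h_cycle]
    _ = k * (P ^ k.natPred * P.map D).trace := by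
        rw [Finset.sum_const, card_pnatAntidiagonal_add_one, nsmul_eq_mul]

end MatrixDerivation

section CyclicContraction

variable {A n : Type*} [CommSemiring A] [Fintype n]

/-- The contraction of a tensor `Φ` with three slots indexed by matrix entries against three copies
of the matrix `X`, the row indices being rotated. If the entries of `X` are independent variables,
its value at `Φ u v w = ∂ᵤ ∂ᵥ ∂_w P` is the normally ordered trace `:tr D³:` applied to `P`. -/
def cyclicContraction (X : Matrix n n A) : (n × n → n × n → n × n → A) →ₗ[A] A where
  toFun Φ := ∑ a, ∑ b, ∑ c, ∑ e, ∑ f, ∑ g, X a e * X b f * X c g * Φ (b, e) (c, f) (a, g)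
  map_add' Φ Ψ := by simp only [Pi.add_apply, mul_add, Finset.sum_add_distrib]
  map_smul' r Φ := by
    simp only [Pi.smul_apply, smul_eq_mul, Finset.mul_sum, mul_left_comm, RingHom.id_apply]

variable (X P Q S : Matrix n n A)

lemma cyclicContraction_rotate (Φ : n × n → n × n → n × n → A) :
    cyclicContraction X (fun u v w ↦ Φ v w u) = cyclicContraction X Φ := by
  change ∑ a, ∑ b, ∑ c, ∑ e, ∑ f, ∑ g, X a e * X b f * X c g * Φ (c, f) (a, g) (b, e) =
    ∑ a, ∑ b, ∑ c, ∑ e, ∑ f, ∑ g, X a e * X b f * X c g * Φ (b, e) (c, f) (a, g)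
  rw [sum_rotate]
  refine Finset.sum_congr rfl fun a _ ↦ Finset.sum_congr rfl fun b _ ↦
    Finset.sum_congr rfl fun c _ ↦ ?_
  rw [sum_rotate]
  exact Finset.sum_congr rfl fun e _ ↦ Finset.sum_congr rfl fun f _ ↦
    Finset.sum_congr rfl fun g _ ↦ by ring

lemma sum_sum_sum_mul_mul_mul (a b c i j k : n) :
    ∑ e, ∑ f, ∑ g, X a e * X b f * X c g * (P e i * Q f j * S g k) =
      (X * P) a i * (X * Q) b j * (X * S) c k := by
  rw [Matrix.mul_apply, Matrix.mul_apply, Matrix.mul_apply, Finset.sum_mul_sum, Finset.sum_mul]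
  refine Finset.sum_congr rfl fun e _ ↦ ?_
  rw [Finset.sum_mul]
  refine Finset.sum_congr rfl fun f _ ↦ ?_
  rw [Finset.mul_sum]
  exact Finset.sum_congr rfl fun g _ ↦ by ring

lemma trace_mul_mul_eq_sum :
    (P * Q * S).trace = ∑ a, ∑ b, ∑ c, P a b * Q b c * S c a := by
  simp only [Matrix.trace, Matrix.diag, Matrix.mul_apply, Finset.sum_mul]
  exact Finset.sum_congr rfl fun a _ ↦ Finset.sum_comm

lemma trace_mul_eq_sum : (P * Q).trace = ∑ a, ∑ b, P a b * Q b a := by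
  simp only [Matrix.trace, Matrix.diag, Matrix.mul_apply]

lemma cyclicContraction_diag_diag_diag :
    cyclicContraction X (fun u v w ↦ P u.2 u.1 * Q v.2 v.1 * S w.2 w.1) =
      (X * P * (X * Q) * (X * S)).trace := by
  simp only [cyclicContraction, LinearMap.coe_mk, AddHom.coe_mk, sum_sum_sum_mul_mul_mul]
  rw [trace_mul_mul_eq_sum]

lemma cyclicContraction_three_cycle :
    cyclicContraction X (fun u v w ↦ P u.2 v.1 * Q v.2 w.1 * S w.2 u.1) =
      (X * P * (X * S) * (X * Q)).trace := by
  simp only [cyclicContraction, LinearMap.coe_mk, AddHom.coe_mk, sum_sum_sum_mul_mul_mul]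
  rw [trace_mul_mul_eq_sum]
  simp only [mul_right_comm]
  exact Finset.sum_congr rfl fun a _ ↦ Finset.sum_comm

lemma cyclicContraction_inverse_three_cycle :
    cyclicContraction X (fun u v w ↦ P u.2 w.1 * Q v.2 u.1 * S w.2 v.1) =
      (X * P).trace * (X * Q).trace * (X * S).trace := by
  simp only [cyclicContraction, LinearMap.coe_mk, AddHom.coe_mk, sum_sum_sum_mul_mul_mul]
  simp only [← Finset.mul_sum, ← Finset.sum_mul, Matrix.trace, Matrix.diag]

lemma cyclicContraction_transposition :
    cyclicContraction X (fun u v w ↦ P u.2 u.1 * Q v.2 w.1 * S w.2 v.1) =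
      (X * P * (X * Q)).trace * (X * S).trace := by
  simp only [cyclicContraction, LinearMap.coe_mk, AddHom.coe_mk, sum_sum_sum_mul_mul_mul]
  rw [trace_mul_eq_sum]
  simp only [← Finset.mul_sum, ← Finset.sum_mul, Matrix.trace, Matrix.diag]

end CyclicContraction

section GenericMatrix

variable {R n : Type*} [CommSemiring R] [DecidableEq n]

local notation "𝐗" => Matrix.mvPolynomialX n n R

lemma map_pderiv_mvPolynomialX (u : n × n) :
    𝐗.map (pderiv u) = Matrix.single u.1 u.2 1 := by
  ext i j : 2
  simp [Matrix.mvPolynomialX_apply, pderiv_X, Pi.single_apply, Matrix.single_apply, Prod.ext_iff,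
    eq_comm]

variable [Fintype n]

variable (R n) in
/-- The power sum `p_k = tr Xᵏ` of the matrix `X` of independent variables. -/
noncomputable def tracePow (k : ℕ+) : MvPolynomial (n × n) R := (𝐗 ^ (k : ℕ)).trace

lemma mvPolynomialX_mul_pow_natPred (k : ℕ+) : 𝐗 * 𝐗 ^ k.natPred = 𝐗 ^ (k : ℕ) := by
  rw [← pow_succ', PNat.natPred_add_one]

lemma pderiv_mvPolynomialX_pow_natPred_apply (u : n × n) (k : ℕ+) (i j : n) :
    pderiv u ((𝐗 ^ k.natPred) i j) =
      ∑ x ∈ pnatAntidiagonal k, (𝐗 ^ x.1.natPred) i u.1 * (𝐗 ^ x.2.natPred) u.2 j := by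
  have h_entry := congrFun₂ (map_derivation_pow_natPred (pderiv u) 𝐗 k) i j
  rw [Matrix.map_apply, map_pderiv_mvPolynomialX, Matrix.sum_apply] at h_entry
  rw [h_entry]
  refine Finset.sum_congr rfl fun x _ ↦ ?_
  rw [Matrix.mul_apply, Finset.sum_eq_single_of_mem u.2 (Finset.mem_univ _) fun l _ hl ↦ by
    rw [Matrix.mul_single_apply_of_ne _ _ _ _ _ hl, zero_mul], Matrix.mul_single_apply_same,
    mul_one]

lemma pderiv_tracePow (u : n × n) (k : ℕ+) :
    pderiv u (tracePow R n k) = (k : ℕ) • (𝐗 ^ k.natPred) u.2 u.1 := by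
  rw [tracePow, derivation_trace_pow, map_pderiv_mvPolynomialX, Matrix.trace_mul_single]
  simp

lemma pderiv_pderiv_tracePow (u v : n × n) (k : ℕ+) :
    pderiv u (pderiv v (tracePow R n k)) = (k : ℕ) • ∑ x ∈ pnatAntidiagonal k,
      (𝐗 ^ x.1.natPred) v.2 u.1 * (𝐗 ^ x.2.natPred) u.2 v.1 := by
  rw [pderiv_tracePow, map_nsmul, pderiv_mvPolynomialX_pow_natPred_apply]

lemma pderiv_pderiv_pderiv_tracePow (u v w : n × n) (k : ℕ+) :
    pderiv u (pderiv v (pderiv w (tracePow R n k))) =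
      (k : ℕ) • ∑ x ∈ pnatAntidiagonal k, ∑ y ∈ pnatAntidiagonal x.2,
        ((𝐗 ^ y.2.natPred) u.2 v.1 * (𝐗 ^ x.1.natPred) v.2 w.1 * (𝐗 ^ y.1.natPred) w.2 u.1 +
          (𝐗 ^ y.2.natPred) u.2 w.1 * (𝐗 ^ y.1.natPred) v.2 u.1 *
            (𝐗 ^ x.1.natPred) w.2 v.1) := by
  rw [pderiv_pderiv_tracePow]
  simp only [map_nsmul, map_sum, pderiv_mul, pderiv_mvPolynomialX_pow_natPred_apply,
    Finset.sum_add_distrib]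
  congr 2
  · rw [← sum_pnatAntidiagonal_swap]
    refine Finset.sum_congr rfl fun x _ ↦ ?_
    rw [Finset.sum_mul]
    exact Finset.sum_congr rfl fun y _ ↦ by simp only [Prod.snd_swap]; ring
  · refine Finset.sum_congr rfl fun x _ ↦ ?_
    rw [Finset.mul_sum]
    exact Finset.sum_congr rfl fun y _ ↦ by ring

lemma cyclicContraction_pderiv_mul_pderiv_mul_pderiv_tracePow (i j k : ℕ+) :
    cyclicContraction 𝐗 (fun u v w ↦ pderiv u (tracePow R n i) * pderiv v (tracePow R n j) *
      pderiv w (tracePow R n k)) = (i * j * k : ℕ) • tracePow R n (i + j + k) := by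
  have h_monomials : (fun u v w : n × n ↦ pderiv u (tracePow R n i) * pderiv v (tracePow R n j) *
      pderiv w (tracePow R n k)) = (i * j * k : ℕ) • fun u v w ↦ (𝐗 ^ i.natPred) u.2 u.1 *
        (𝐗 ^ j.natPred) v.2 v.1 * (𝐗 ^ k.natPred) w.2 w.1 := by
    funext u v w
    simp only [pderiv_tracePow, Pi.smul_apply, smul_mul_smul_comm]
  rw [h_monomials, map_nsmul, cyclicContraction_diag_diag_diag]
  simp only [mvPolynomialX_mul_pow_natPred, ← pow_add, tracePow, PNat.add_coe]

lemma cyclicContraction_pderiv_mul_pderiv_pderiv_tracePow (i j : ℕ+) :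
    cyclicContraction 𝐗
        (fun u v w ↦ pderiv u (tracePow R n i) * pderiv v (pderiv w (tracePow R n j))) =
      (i * j : ℕ) • ∑ x ∈ pnatAntidiagonal j, tracePow R n x.1 * tracePow R n (x.2 + i) := by
  have h_monomials : (fun u v w : n × n ↦
      pderiv u (tracePow R n i) * pderiv v (pderiv w (tracePow R n j))) =
        (i * j : ℕ) • ∑ x ∈ pnatAntidiagonal j, fun u v w ↦ (𝐗 ^ i.natPred) u.2 u.1 *
          (𝐗 ^ x.2.natPred) v.2 w.1 * (𝐗 ^ x.1.natPred) w.2 v.1 := by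
    funext u v w
    simp only [pderiv_pderiv_tracePow, pderiv_tracePow u, Pi.smul_apply, Finset.sum_apply,
      smul_mul_smul_comm, Finset.mul_sum]
    exact congrArg _ (Finset.sum_congr rfl fun x _ ↦ by ring)
  rw [h_monomials, map_nsmul, map_sum]
  simp only [cyclicContraction_transposition, mvPolynomialX_mul_pow_natPred, ← pow_add, tracePow,
    PNat.add_coe]
  exact congrArg _ (Finset.sum_congr rfl fun x _ ↦ by rw [mul_comm, add_comm (x.2 : ℕ)])

lemma cyclicContraction_pderiv_pderiv_pderiv_tracePow (k : ℕ+) :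
    cyclicContraction 𝐗 (fun u v w ↦ pderiv u (pderiv v (pderiv w (tracePow R n k)))) =
      (k : ℕ) • ∑ x ∈ pnatAntidiagonal k, ∑ y ∈ pnatAntidiagonal x.2,
        (tracePow R n x.1 * tracePow R n y.1 * tracePow R n y.2 +
          tracePow R n (x.1 + y.1 + y.2)) := by
  have h_monomials : (fun u v w : n × n ↦ pderiv u (pderiv v (pderiv w (tracePow R n k)))) =
      (k : ℕ) • ∑ x ∈ pnatAntidiagonal k, ∑ y ∈ pnatAntidiagonal x.2,
        ((fun u v w ↦ (𝐗 ^ y.2.natPred) u.2 v.1 * (𝐗 ^ x.1.natPred) v.2 w.1 *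
            (𝐗 ^ y.1.natPred) w.2 u.1) +
          fun u v w ↦ (𝐗 ^ y.2.natPred) u.2 w.1 * (𝐗 ^ y.1.natPred) v.2 u.1 *
            (𝐗 ^ x.1.natPred) w.2 v.1) := by
    funext u v w
    simp only [pderiv_pderiv_pderiv_tracePow, Pi.smul_apply, Finset.sum_apply, Pi.add_apply]
  rw [h_monomials]
  simp only [map_nsmul, map_sum, map_add, cyclicContraction_three_cycle,
    cyclicContraction_inverse_three_cycle, mvPolynomialX_mul_pow_natPred, ← pow_add, tracePow,
    PNat.add_coe]
  refine congrArg _ (Finset.sum_congr rfl fun x _ ↦ Finset.sum_congr rfl fun y _ ↦ ?_)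
  ring_nf

lemma pderiv_pderiv_pderiv_aeval_tracePow (F : MvPolynomial ℕ+ R) :
    (fun u v w ↦ pderiv u (pderiv v (pderiv w (aeval (tracePow R n) F)))) =
      (∑ i ∈ F.vars, ∑ j ∈ F.vars, ∑ k ∈ F.vars,
        aeval (tracePow R n) (pderiv i (pderiv j (pderiv k F))) • fun u v w ↦
          pderiv u (tracePow R n i) * pderiv v (tracePow R n j) * pderiv w (tracePow R n k)) +
      (∑ i ∈ F.vars, ∑ j ∈ F.vars, aeval (tracePow R n) (pderiv i (pderiv j F)) •
        ((fun u v w ↦ pderiv u (tracePow R n i) * pderiv v (pderiv w (tracePow R n j))) +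
          (fun u v w ↦ pderiv v (tracePow R n i) * pderiv w (pderiv u (tracePow R n j))) +
          fun u v w ↦ pderiv w (tracePow R n i) * pderiv u (pderiv v (tracePow R n j)))) +
      ∑ k ∈ F.vars, aeval (tracePow R n) (pderiv k F) • fun u v w ↦
        pderiv u (pderiv v (pderiv w (tracePow R n k))) := by
  funext u v w
  rw [derivation_derivation_derivation_aeval]
  simp only [Pi.add_apply, Finset.sum_apply, Pi.smul_apply, smul_eq_mul, pderiv_comm u w]

lemma cyclicContraction_sum_rotations_pderiv_mul_pderiv_pderiv_tracePow (i j : ℕ+) :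
    cyclicContraction 𝐗
        ((fun u v w ↦ pderiv u (tracePow R n i) * pderiv v (pderiv w (tracePow R n j))) +
          (fun u v w ↦ pderiv v (tracePow R n i) * pderiv w (pderiv u (tracePow R n j))) +
          fun u v w ↦ pderiv w (tracePow R n i) * pderiv u (pderiv v (tracePow R n j))) =
      3 • (i * j : ℕ) • ∑ x ∈ pnatAntidiagonal j, tracePow R n x.1 * tracePow R n (x.2 + i) := by
  have h_rotate := cyclicContraction_rotate 𝐗
    fun u v w ↦ pderiv u (tracePow R n i) * pderiv v (pderiv w (tracePow R n j))
  have h_rotate' := cyclicContraction_rotate 𝐗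
    fun u v w ↦ pderiv v (tracePow R n i) * pderiv w (pderiv u (tracePow R n j))
  rw [map_add, map_add, h_rotate', h_rotate, cyclicContraction_pderiv_mul_pderiv_pderiv_tracePow]
  abel

lemma cyclicContraction_pderiv_pderiv_pderiv_aeval_tracePow (F : MvPolynomial ℕ+ R) :
    cyclicContraction 𝐗
        (fun u v w ↦ pderiv u (pderiv v (pderiv w (aeval (tracePow R n) F)))) =
      aeval (tracePow R n) (
        (∑ i ∈ F.vars, ∑ j ∈ F.vars, ∑ k ∈ F.vars,
          (i * j * k : ℕ) • (X (i + j + k) * pderiv i (pderiv j (pderiv k F)))) +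
        3 • (∑ i ∈ F.vars, ∑ j ∈ F.vars, (i * j : ℕ) •
          ((∑ x ∈ pnatAntidiagonal j, X x.1 * X (x.2 + i)) * pderiv i (pderiv j F))) +
        ∑ k ∈ F.vars, (k : ℕ) • ((∑ x ∈ pnatAntidiagonal k, ∑ y ∈ pnatAntidiagonal x.2,
          (X x.1 * X y.1 * X y.2 + X (x.1 + y.1 + y.2))) * pderiv k F)) := by
  rw [pderiv_pderiv_pderiv_aeval_tracePow, map_add, map_add]
  simp only [map_sum, map_smul, cyclicContraction_pderiv_mul_pderiv_mul_pderiv_tracePow,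
    cyclicContraction_sum_rotations_pderiv_mul_pderiv_pderiv_tracePow,
    cyclicContraction_pderiv_pderiv_pderiv_tracePow]
  simp only [map_add, map_sum, map_nsmul, map_mul, aeval_X, smul_eq_mul, mul_smul_comm,
    smul_mul_assoc, Finset.smul_sum (s := F.vars), mul_comm]

end GenericMatrix

section Finsum

variable {M : Type*} [AddCommMonoid M]

lemma finsum_finsum_eq_sum {α β : Type*} (s : Finset (α × β)) {f : α → β → M}
    (hf : ∀ a b, f a b ≠ 0 → (a, b) ∈ s) :
    ∑ᶠ a, ∑ᶠ b, f a b = ∑ x ∈ s, f x.1 x.2 := by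
  have h_support : (fun x : α × β ↦ f x.1 x.2).support ⊆ s := fun x hx ↦ hf x.1 x.2 hx
  rw [← finsum_eq_sum_of_support_subset _ h_support]
  exact (finsum_curry _ (s.finite_toSet.subset h_support)).symm

lemma finsum_finsum_eq_sum_pnatAntidiagonal (s : Finset ℕ+) {f : ℕ+ → ℕ+ → M}
    (hf : ∀ a b, f a b ≠ 0 → a + b ∈ s) :
    ∑ᶠ a, ∑ᶠ b, f a b = ∑ k ∈ s, ∑ x ∈ pnatAntidiagonal k, f x.1 x.2 := by
  rw [finsum_finsum_eq_sum (s.biUnion pnatAntidiagonal), Finset.sum_biUnion]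
  · intro k _ l _ hkl
    refine Finset.disjoint_left.mpr fun x hk hl ↦ hkl ?_
    rw [← mem_pnatAntidiagonal.mp hk, mem_pnatAntidiagonal.mp hl]
  · exact fun a b hab ↦
      Finset.mem_biUnion.mpr ⟨a + b, hf a b hab, mem_pnatAntidiagonal.mpr rfl⟩

lemma finsum_finsum_finsum_eq_sum_pnatAntidiagonal (s : Finset ℕ+) {f : ℕ+ → ℕ+ → ℕ+ → M}
    (hf : ∀ a b c, f a b c ≠ 0 → a + b + c ∈ s) :
    ∑ᶠ a, ∑ᶠ b, ∑ᶠ c, f a b c =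
      ∑ k ∈ s, ∑ x ∈ pnatAntidiagonal k, ∑ y ∈ pnatAntidiagonal x.2, f x.1 y.1 y.2 := by
  set t := s.biUnion fun k ↦ (pnatAntidiagonal k).image Prod.snd
  have h_mem_t (a m : ℕ+) (h : a + m ∈ s) : m ∈ t :=
    Finset.mem_biUnion.mpr
      ⟨a + m, h, Finset.mem_image.mpr ⟨(a, m), mem_pnatAntidiagonal.mpr rfl, rfl⟩⟩
  have h_add_mem (a m : ℕ+) (h : ∑ y ∈ pnatAntidiagonal m, f a y.1 y.2 ≠ 0) : a + m ∈ s := by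
    obtain ⟨y, hy, hfy⟩ := Finset.exists_ne_zero_of_sum_ne_zero h
    rw [← mem_pnatAntidiagonal.mp hy, ← add_assoc]
    exact hf a y.1 y.2 hfy
  have h_inner (a : ℕ+) :
      ∑ᶠ b, ∑ᶠ c, f a b c = ∑ᶠ m, ∑ y ∈ pnatAntidiagonal m, f a y.1 y.2 := by
    rw [finsum_finsum_eq_sum_pnatAntidiagonal t, finsum_eq_sum_of_support_subset]
    · exact fun m hm ↦ h_mem_t a m (h_add_mem a m hm)
    · exact fun b c hbc ↦ h_mem_t a (b + c) (add_assoc a b c ▸ hf a b c hbc)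
  simp only [h_inner]
  exact finsum_finsum_eq_sum_pnatAntidiagonal s h_add_mem

lemma finsum_finsum_finsum_eq_sum {α : Type*} (s : Finset α) {f : α → α → α → M}
    (hf : ∀ a b c, f a b c ≠ 0 → a ∈ s ∧ b ∈ s ∧ c ∈ s) :
    ∑ᶠ a, ∑ᶠ b, ∑ᶠ c, f a b c = ∑ a ∈ s, ∑ b ∈ s, ∑ c ∈ s, f a b c := by
  have h_inner (a b : α) : ∑ᶠ c, f a b c = ∑ c ∈ s, f a b c :=
    finsum_eq_sum_of_support_subset _ fun c hc ↦ (hf a b c hc).2.2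
  simp only [h_inner]
  rw [finsum_finsum_eq_sum (s ×ˢ s), Finset.sum_product]
  intro a b hab
  obtain ⟨c, _, hc⟩ := Finset.exists_ne_zero_of_sum_ne_zero hab
  exact Finset.mk_mem_product (hf a b c hc).1 (hf a b c hc).2.1

lemma finsum_ite_add_eq_add (s : Finset ℕ+) {f : ℕ+ → ℕ+ → ℕ+ → ℕ+ → M}
    (hf : ∀ a b c d, f a b c d ≠ 0 → c ∈ s ∧ d ∈ s) :
    (∑ᶠ a, ∑ᶠ b, ∑ᶠ c, ∑ᶠ d, if a + b = c + d then f a b c d else 0) =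
      ∑ c ∈ s, ∑ d ∈ s, ∑ x ∈ pnatAntidiagonal (c + d), f x.1 x.2 c d := by
  have h_inner (a b : ℕ+) : (∑ᶠ c, ∑ᶠ d, if a + b = c + d then f a b c d else 0) =
      ∑ y ∈ s ×ˢ s, if a + b = y.1 + y.2 then f a b y.1 y.2 else 0 :=
    finsum_finsum_eq_sum _ fun c d hcd ↦
      Finset.mem_product.mpr (hf a b c d (ite_ne_right_iff.mp hcd).2)
  set t := (s ×ˢ s).biUnion fun y ↦ pnatAntidiagonal (y.1 + y.2)
  simp only [h_inner]
  rw [finsum_finsum_eq_sum t, Finset.sum_comm, Finset.sum_product]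
  · refine Finset.sum_congr rfl fun c hc ↦ Finset.sum_congr rfl fun d hd ↦ ?_
    have h_filter : {x ∈ t | x.1 + x.2 = c + d} = pnatAntidiagonal (c + d) := by
      ext x
      rw [Finset.mem_filter, mem_pnatAntidiagonal, and_iff_right_iff_imp]
      exact fun hx ↦ Finset.mem_biUnion.mpr
        ⟨(c, d), Finset.mk_mem_product hc hd, mem_pnatAntidiagonal.mpr hx⟩
    rw [← Finset.sum_filter, h_filter]
  · intro a b hab
    obtain ⟨y, hy, hfy⟩ := Finset.exists_ne_zero_of_sum_ne_zero hab
    exact Finset.mem_biUnion.mpr ⟨y, hy, mem_pnatAntidiagonal.mpr (ite_ne_right_iff.mp hfy).1⟩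

end Finsum

lemma sum_pnatAntidiagonal_add_one_sub_ite_smul {k M : Type*} [Ring k] [AddCommGroup M]
    [Module k M] (c d : ℕ+) (f : ℕ+ → ℕ+ → M) :
    ∑ x ∈ pnatAntidiagonal (c + d),
        (1 - (if x.1 = c then (1 : k) else 0) * (if x.2 = d then (1 : k) else 0)) • f x.1 x.2 =
      ∑ y ∈ pnatAntidiagonal c, f y.1 (y.2 + d) + ∑ y ∈ pnatAntidiagonal d, f (c + y.1) y.2 := by
  have h_fst_ne (y) (hy : y ∈ pnatAntidiagonal c) : y.1 ≠ c :=
    (mem_pnatAntidiagonal.mp hy ▸ PNat.lt_add_right _ _ : y.1 < c).ne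
  have h_snd_ne (y) (hy : y ∈ pnatAntidiagonal d) : y.2 ≠ d :=
    (mem_pnatAntidiagonal.mp hy ▸ PNat.lt_add_left _ _ : y.2 < d).ne
  rw [sum_pnatAntidiagonal_add]
  simp only [if_true, mul_one, sub_self, zero_smul, zero_add]
  congr 1
  · exact Finset.sum_congr rfl fun y hy ↦ by simp [h_fst_ne y hy]
  · exact Finset.sum_congr rfl fun y hy ↦ by simp [h_snd_ne y hy]

section PowerSumOperator

variable {R : Type*} [CommRing R] [Algebra ℚ R] (F : MvPolynomial ℕ+ R)

lemma finsum_X_mul_pderiv_pderiv_pderiv :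
    ∑ᶠ a : ℕ+, ∑ᶠ b : ℕ+, ∑ᶠ c : ℕ+, (((a : ℕ) : ℚ) * ((b : ℕ) : ℚ) * ((c : ℕ) : ℚ)) •
        (X (a + b + c) * pderiv a (pderiv b (pderiv c F))) =
      ∑ i ∈ F.vars, ∑ j ∈ F.vars, ∑ k ∈ F.vars,
        (i * j * k : ℕ) • (X (i + j + k) * pderiv i (pderiv j (pderiv k F))) := by
  rw [finsum_finsum_finsum_eq_sum F.vars fun a b c h ↦ mem_vars_of_pderiv_pderiv_pderiv_ne_zero
    (right_ne_zero_of_mul (right_ne_zero_of_smul h))]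
  simp only [← Nat.cast_mul, Nat.cast_smul_eq_nsmul]

lemma finsum_X_mul_X_mul_pderiv_pderiv :
    (∑ᶠ a : ℕ+, ∑ᶠ b : ℕ+, ∑ᶠ c : ℕ+, ∑ᶠ d : ℕ+, if a + b = c + d then
        (((c : ℕ) : ℚ) * ((d : ℕ) : ℚ) *
            (1 - (if a = c then (1 : ℚ) else 0) * (if b = d then (1 : ℚ) else 0))) •
          (X a * X b * pderiv c (pderiv d F))
      else 0) =
      2 • ∑ i ∈ F.vars, ∑ j ∈ F.vars, (i * j : ℕ) •
        ((∑ x ∈ pnatAntidiagonal j, X x.1 * X (x.2 + i)) * pderiv i (pderiv j F)) := by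
  set B : ℕ+ → ℕ+ → MvPolynomial ℕ+ R := fun i j ↦ (i * j : ℕ) •
    ((∑ x ∈ pnatAntidiagonal j, X x.1 * X (x.2 + i)) * pderiv i (pderiv j F))
  have h_pair (c d : ℕ+) : ∑ x ∈ pnatAntidiagonal (c + d), (((c : ℕ) : ℚ) * ((d : ℕ) : ℚ) *
      (1 - (if x.1 = c then (1 : ℚ) else 0) * (if x.2 = d then (1 : ℚ) else 0))) •
        (X x.1 * X x.2 * pderiv c (pderiv d F)) = B d c + B c d := by
    simp only [mul_smul, ← Finset.smul_sum]
    rw [sum_pnatAntidiagonal_add_one_sub_ite_smul c d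
      fun a b ↦ X a * X b * pderiv c (pderiv d F), ← sum_pnatAntidiagonal_swap d,
      ← mul_smul, ← Nat.cast_mul, Nat.cast_smul_eq_nsmul]
    simp only [B, Prod.fst_swap, Prod.snd_swap, ← Finset.sum_mul, smul_add, mul_comm (d : ℕ),
      pderiv_comm d c, add_comm c, mul_comm (X (_ + c))]
  rw [finsum_ite_add_eq_add F.vars fun a b c d h ↦ mem_vars_of_pderiv_pderiv_ne_zero
    (right_ne_zero_of_mul (right_ne_zero_of_smul h))]
  simp only [h_pair, Finset.sum_add_distrib]
  rw [Finset.sum_comm, two_nsmul]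

lemma finsum_X_mul_X_mul_X_add_X_mul_pderiv :
    ∑ᶠ a : ℕ+, ∑ᶠ b : ℕ+, ∑ᶠ c : ℕ+, (((a : ℕ) : ℚ) + ((b : ℕ) : ℚ) + ((c : ℕ) : ℚ)) •
        ((X a * X b * X c + X (a + b + c)) * pderiv (a + b + c) F) =
      ∑ k ∈ F.vars, (k : ℕ) • ((∑ x ∈ pnatAntidiagonal k, ∑ y ∈ pnatAntidiagonal x.2,
        (X x.1 * X y.1 * X y.2 + X (x.1 + y.1 + y.2))) * pderiv k F) := by
  rw [finsum_finsum_finsum_eq_sum_pnatAntidiagonal F.vars fun a b c h ↦ mem_vars_of_pderiv_ne_zero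
    (right_ne_zero_of_mul (right_ne_zero_of_smul h))]
  refine Finset.sum_congr rfl fun k _ ↦ ?_
  simp only [Finset.sum_mul, Finset.smul_sum]
  refine Finset.sum_congr rfl fun x hx ↦ Finset.sum_congr rfl fun y hy ↦ ?_
  have h_sum : x.1 + y.1 + y.2 = k := by
    rw [add_assoc, mem_pnatAntidiagonal.mp hy, mem_pnatAntidiagonal.mp hx]
  rw [← Nat.cast_add, ← Nat.cast_add, ← PNat.add_coe, ← PNat.add_coe, h_sum,
    Nat.cast_smul_eq_nsmul]

theorem W3_in_power_sum_coordinates_general {n : Type*} [Fintype n] [DecidableEq n] :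
    (1/3 : ℚ) • cyclicContraction (Matrix.mvPolynomialX n n R)
        (fun u v w ↦ pderiv u (pderiv v (pderiv w (aeval (tracePow R n) F)))) =
      aeval (tracePow R n) (
        (1/3 : ℚ) • (∑ᶠ a : ℕ+, ∑ᶠ b : ℕ+, ∑ᶠ c : ℕ+,
          (((a : ℕ) : ℚ) * ((b : ℕ) : ℚ) * ((c : ℕ) : ℚ)) •
            (X (a + b + c) * pderiv a (pderiv b (pderiv c F)))) +
        (1/2 : ℚ) • (∑ᶠ a : ℕ+, ∑ᶠ b : ℕ+, ∑ᶠ c : ℕ+, ∑ᶠ d : ℕ+,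
          if a + b = c + d then
            (((c : ℕ) : ℚ) * ((d : ℕ) : ℚ) *
                (1 - (if a = c then (1 : ℚ) else 0) * (if b = d then (1 : ℚ) else 0))) •
              (X a * X b * pderiv c (pderiv d F))
          else 0) +
        (1/3 : ℚ) • (∑ᶠ a : ℕ+, ∑ᶠ b : ℕ+, ∑ᶠ c : ℕ+,
          (((a : ℕ) : ℚ) + ((b : ℕ) : ℚ) + ((c : ℕ) : ℚ)) •
            ((X a * X b * X c + X (a + b + c)) * pderiv (a + b + c) F))) := by
  rw [finsum_X_mul_pderiv_pderiv_pderiv, finsum_X_mul_X_mul_pderiv_pderiv,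
    finsum_X_mul_X_mul_X_add_X_mul_pderiv, cyclicContraction_pderiv_pderiv_pderiv_aeval_tracePow,
    ← map_rat_smul]
  congr 1
  module

end PowerSumOperator

lemma sum_fin_three_arrow {α M : Type*} [Fintype α] [AddCommMonoid M] (f : (Fin 3 → α) → M) :
    ∑ e, f e = ∑ a, ∑ b, ∑ c, f ![a, b, c] := by
  let triples : (Fin 3 → α) ≃ α × α × α :=
    ⟨fun e ↦ (e 0, e 1, e 2), fun x ↦ ![x.1, x.2.1, x.2.2], FinVec.etaExpand_eq, fun _ ↦ rfl⟩
  rw [← triples.symm.sum_comp, Fintype.sum_prod_type]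
  exact Finset.sum_congr rfl fun a _ ↦ Fintype.sum_prod_type _

lemma sum_NOpN_cyclic_eq_cyclicContraction (N : ℕ) (P : RN N) :
    ∑ a, ∑ b, ∑ c, NOpN N ![a, b, c] ![b, c, a] P =
      cyclicContraction (Matrix.mvPolynomialX (Fin N) (Fin N) ℚ)
        fun u v w ↦ pderiv u (pderiv v (pderiv w P)) := by
  simp only [NOpN, sum_fin_three_arrow, Fin.prod_univ_three]
  rfl

theorem W3_in_power_sum_coordinates (N : ℕ) (hN : 1 ≤ N) (F : MvPolynomial ℕ+ ℚ) :
    (1/3 : ℚ) • ∑ a : Fin N, ∑ b : Fin N, ∑ c : Fin N,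
        NOpN N ![a, b, c] ![b, c, a] (psubst N F) =
      psubst N (
        (1/3 : ℚ) • (∑ᶠ a : ℕ+, ∑ᶠ b : ℕ+, ∑ᶠ c : ℕ+,
          (((a : ℕ) : ℚ) * ((b : ℕ) : ℚ) * ((c : ℕ) : ℚ)) •
            (MvPolynomial.X (a + b + c) *
              MvPolynomial.pderiv a (MvPolynomial.pderiv b (MvPolynomial.pderiv c F)))) +
        (1/2 : ℚ) • (∑ᶠ a : ℕ+, ∑ᶠ b : ℕ+, ∑ᶠ c : ℕ+, ∑ᶠ d : ℕ+,
          if a + b = c + d then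
            (((c : ℕ) : ℚ) * ((d : ℕ) : ℚ) *
                (1 - (if a = c then (1 : ℚ) else 0) * (if b = d then (1 : ℚ) else 0))) •
              (MvPolynomial.X a * MvPolynomial.X b *
                MvPolynomial.pderiv c (MvPolynomial.pderiv d F))
          else 0) +
        (1/3 : ℚ) • (∑ᶠ a : ℕ+, ∑ᶠ b : ℕ+, ∑ᶠ c : ℕ+,
          (((a : ℕ) : ℚ) + ((b : ℕ) : ℚ) + ((c : ℕ) : ℚ)) •
            ((MvPolynomial.X a * MvPolynomial.X b * MvPolynomial.X c +
                MvPolynomial.X (a + b + c)) *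
              MvPolynomial.pderiv (a + b + c) F))) := by
  rw [sum_NOpN_cyclic_eq_cyclicContraction]
  exact W3_in_power_sum_coordinates_general F
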